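/- arXiv:math/0509720 — 5 statements merged into one kernel-verified Lean document; each statement's English description precedes it below -/
import Mathlib

section
/- Iterated Skorokhod reflection gives the last-passage functional: let γ^1, …, γ^n : [0,∞) → ℝ be continuous functions with γ^k(0) = 0 for each k. Define X^1(t) = γ^1(t) and, recursively for k = 2, …, n, X^k(t) = γ^k(t) + sup_{0 ≤ s ≤ t} (X^{k−1}(s) − γ^k(s)). Then for every t ≥ 0, X^n(t) = sup over all chains 0 = t_0 ≤ t_1 ≤ … ≤ t_n = t of Σ_{i=1}^n (γ^i(t_i) − γ^i(t_{i−1})). -/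
/-!
Splitting a chain `a = t_0 ≤ … ≤ t_k ≤ t_{k+1} = t` at its penultimate time `s = t_k` separates the
last increment `γ^{k+1}(t) - γ^{k+1}(s)` from a chain of length `k` ending at `s`. Taking the
supremum first over the shorter chain and then over `s` turns the last-passage functional of `k`
paths into that of `k + 1` paths, and since `γ^{k+1}(t)` does not depend on `s`, this second
supremum is the reflection off `γ^{k+1}`. So induction on the number of paths works as soon as all
the suprema are finite, for which boundedness of the paths is enough.
-/

open Set

section FinSnoc

variable {α : Type*} [Preorder α] {k : ℕ} {τ : Fin (k + 1) → α} {t : α}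

theorem monotone_fin_snoc_iff :
    Monotone (Fin.snoc τ t : Fin (k + 2) → α) ↔ Monotone τ ∧ τ (Fin.last k) ≤ t := by
  simp only [Fin.monotone_iff_le_succ, Fin.forall_fin_succ', Fin.succ_castSucc, Fin.succ_last,
    Fin.snoc_castSucc, Fin.snoc_last]

end FinSnoc

section PassageSums

variable {α E : Type*} [Preorder α] [AddCommGroup E]

/-- The sums `∑ i, (γ^i(t_i) - γ^i(t_{i-1}))` over all chains `a = t_0 ≤ … ≤ t_n = t`. Their
supremum is the last-passage functional of the paths `γ^1, …, γ^n`. Paths are numbered from `1` and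
steps from `0`, so the step `i : Fin n` runs along `γ (i + 1)`. -/
def passageSums (γ : ℕ → α → E) (a : α) (n : ℕ) (t : α) : Set E :=
  {v | ∃ τ : Fin (n + 1) → α, Monotone τ ∧ τ 0 = a ∧ τ (Fin.last n) = t ∧
    v = ∑ i : Fin n, (γ ((i : ℕ) + 1) (τ i.succ) - γ ((i : ℕ) + 1) (τ i.castSucc))}

variable {γ : ℕ → α → E} {a t : α} {k : ℕ}

theorem mem_passageSums_zero {v : E} : v ∈ passageSums γ a 0 t ↔ a = t ∧ v = 0 := by
  constructor
  · rintro ⟨τ, -, rfl, rfl, rfl⟩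
    exact ⟨rfl, Fin.sum_univ_zero _⟩
  · rintro ⟨rfl, rfl⟩
    exact ⟨fun _ ↦ a, monotone_const, rfl, rfl, (Fin.sum_univ_zero _).symm⟩

theorem passageSums_succ (γ : ℕ → α → E) (a : α) (k : ℕ) (t : α) :
    passageSums γ a (k + 1) t =
      ⋃ s : Icc a t, (· + (γ (k + 1) t - γ (k + 1) s)) '' passageSums γ a k s := by
  ext v
  simp only [mem_iUnion, mem_image]
  constructor
  · rintro ⟨τ, hτ, rfl, rfl, rfl⟩
    refine ⟨⟨τ (Fin.last k).castSucc, hτ (Fin.zero_le _), hτ (Fin.le_last _)⟩, _,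
      ⟨Fin.init τ, hτ.comp Fin.strictMono_castSucc.monotone, rfl, rfl, rfl⟩, ?_⟩
    rw [Fin.sum_univ_castSucc]
    rfl
  · rintro ⟨⟨_, -, hst⟩, _, ⟨τ, hτ, rfl, rfl, rfl⟩, rfl⟩
    refine ⟨Fin.snoc τ t, monotone_fin_snoc_iff.2 ⟨hτ, hst⟩, ?_, Fin.snoc_last _ _, ?_⟩
    · rw [← Fin.castSucc_zero, Fin.snoc_castSucc]
    · simp only [Fin.sum_univ_castSucc, Fin.val_castSucc, Fin.val_last, Fin.succ_castSucc,
        Fin.succ_last, Fin.snoc_castSucc, Fin.snoc_last]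

theorem passageSums_one (hat : a ≤ t) : passageSums γ a 1 t = {γ 1 t - γ 1 a} := by
  ext v
  simp only [passageSums_succ, mem_iUnion, mem_image, mem_passageSums_zero, mem_singleton_iff]
  constructor
  · rintro ⟨⟨_, -⟩, _, ⟨rfl, rfl⟩, rfl⟩
    exact zero_add _
  · rintro rfl
    exact ⟨⟨a, le_rfl, hat⟩, 0, ⟨rfl, rfl⟩, zero_add _⟩

theorem passageSums_self_nonempty (γ : ℕ → α → E) (a : α) (n : ℕ) :
    (passageSums γ a n a).Nonempty :=
  ⟨_, fun _ ↦ a, monotone_const, rfl, rfl, rfl⟩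

theorem passageSums_succ_nonempty (γ : ℕ → α → E) (k : ℕ) (hat : a ≤ t) :
    (passageSums γ a (k + 1) t).Nonempty := by
  rw [passageSums_succ]
  exact nonempty_iUnion.2 ⟨⟨a, le_rfl, hat⟩, (passageSums_self_nonempty γ a k).image _⟩

end PassageSums

theorem bddAbove_image_sub {α E : Type*} [AddCommGroup E] [Preorder E] [IsOrderedAddMonoid E]
    {x g : α → E} {s : Set α} (hx : BddAbove (x '' s)) (hg : BddBelow (g '' s)) :
    BddAbove ((fun r ↦ x r - g r) '' s) := by
  obtain ⟨M, hM⟩ := hx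
  obtain ⟨m, hm⟩ := hg
  exact ⟨M - m, forall_mem_image.2 fun r hr ↦
    sub_le_sub (hM (mem_image_of_mem x hr)) (hm (mem_image_of_mem g hr))⟩

section SkorokhodReflection

variable {α E : Type*} [Preorder α] [AddCommGroup E] [ConditionallyCompleteLattice E]

/-- The path `x` reflected off `g` from time `a` on, in Skorokhod's sense:
`t ↦ g(t) + sup_{a ≤ s ≤ t} (x(s) - g(s))`. The supremum is the genuine one only if `x - g` is
bounded above on `[a, t]`. -/
noncomputable def skorokhodReflection (a : α) (g x : α → E) (t : α) : E :=
  g t + sSup ((fun s ↦ x s - g s) '' Icc a t)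

variable [IsOrderedAddMonoid E] {a t : α} {g x : α → E}

theorem isLUB_skorokhodReflection (hat : a ≤ t)
    (hbdd : BddAbove ((fun s ↦ x s - g s) '' Icc a t)) :
    IsLUB (range fun s : Icc a t ↦ x s + (g t - g s)) (skorokhodReflection a g x t) := by
  have hsup := isLUB_csSup ((nonempty_Icc.2 hat).image _) hbdd
  have htranslate : IsLUB ((g t + ·) '' ((fun s ↦ x s - g s) '' Icc a t))
      (skorokhodReflection a g x t) :=
    (OrderIso.addLeft (g t)).isLUB_image'.2 hsup
  rw [image_image, image_eq_range] at htranslate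
  simpa only [add_sub_left_comm] using htranslate

theorem bddAbove_skorokhodReflection (hx : BddAbove (x '' Icc a t))
    (hg_above : BddAbove (g '' Icc a t)) (hg_below : BddBelow (g '' Icc a t)) :
    BddAbove (skorokhodReflection a g x '' Icc a t) := by
  have hbdd := bddAbove_image_sub hx hg_below
  obtain ⟨M, hM⟩ := hg_above
  refine ⟨M + sSup ((fun s ↦ x s - g s) '' Icc a t), forall_mem_image.2 fun s hs ↦ ?_⟩
  exact add_le_add (hM (mem_image_of_mem g hs)) <|
    csSup_le_csSup hbdd ((nonempty_Icc.2 hs.1).image _) (image_mono (Icc_subset_Icc_right hs.2))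

theorem isLUB_passageSums_succ {γ : ℕ → α → E} {k : ℕ} (hat : a ≤ t)
    (hx : ∀ s ∈ Icc a t, IsLUB (passageSums γ a k s) (x s))
    (hbdd : BddAbove ((fun s ↦ x s - γ (k + 1) s) '' Icc a t)) :
    IsLUB (passageSums γ a (k + 1) t) (skorokhodReflection a (γ (k + 1)) x t) := by
  have hlast (s : Icc a t) : IsLUB ((· + (γ (k + 1) t - γ (k + 1) s)) '' passageSums γ a k s)
      (x s + (γ (k + 1) t - γ (k + 1) s)) :=
    (OrderIso.addRight _).isLUB_image'.2 (hx s s.2)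
  rw [passageSums_succ, ← isLUB_iUnion_iff_of_isLUB hlast]
  exact isLUB_skorokhodReflection hat hbdd

section Iterated

variable {n : ℕ} {γ X : ℕ → α → E} {T : α}

theorem bddAbove_iterated_skorokhodReflection
    (hγ_above : ∀ k, BddAbove (γ k '' Icc a T)) (hγ_below : ∀ k, BddBelow (γ k '' Icc a T))
    (hX1 : BddAbove (X 1 '' Icc a T))
    (hXrec : ∀ k, 2 ≤ k → k ≤ n → ∀ t ∈ Icc a T,
      X k t = skorokhodReflection a (γ k) (X (k - 1)) t)
    {k : ℕ} (hk : 1 ≤ k) (hkn : k ≤ n) : BddAbove (X k '' Icc a T) := by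
  induction k, hk using Nat.le_induction with
  | base => exact hX1
  | succ k hk ih =>
    rw [image_congr (hXrec (k + 1) (Nat.succ_le_succ hk) hkn)]
    exact bddAbove_skorokhodReflection (ih (Nat.le_of_succ_le hkn)) (hγ_above _) (hγ_below _)

theorem isLUB_passageSums_iterated_skorokhodReflection
    (hγ_above : ∀ k, BddAbove (γ k '' Icc a T)) (hγ_below : ∀ k, BddBelow (γ k '' Icc a T))
    (hX1 : ∀ t ∈ Icc a T, X 1 t = γ 1 t - γ 1 a)
    (hXrec : ∀ k, 2 ≤ k → k ≤ n → ∀ t ∈ Icc a T,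
      X k t = skorokhodReflection a (γ k) (X (k - 1)) t)
    {k : ℕ} (hk : 1 ≤ k) (hkn : k ≤ n) {t : α} (ht : t ∈ Icc a T) :
    IsLUB (passageSums γ a k t) (X k t) := by
  have hX1_above : BddAbove (X 1 '' Icc a T) := by
    rw [image_congr hX1]
    exact bddAbove_image_sub (hγ_above 1) ⟨γ 1 a, forall_mem_image.2 fun _ _ ↦ le_rfl⟩
  induction k, hk using Nat.le_induction generalizing t with
  | base =>
    rw [passageSums_one ht.1, hX1 t ht]
    exact isLUB_singleton
  | succ k hk ih =>
    have hkn' : k ≤ n := Nat.le_of_succ_le hkn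
    have hsub : Icc a t ⊆ Icc a T := Icc_subset_Icc_right ht.2
    have hXk_above :=
      bddAbove_iterated_skorokhodReflection hγ_above hγ_below hX1_above hXrec hk hkn'
    rw [hXrec (k + 1) (Nat.succ_le_succ hk) hkn t ht]
    exact isLUB_passageSums_succ ht.1 (fun s hs ↦ ih hkn' (hsub hs))
      ((bddAbove_image_sub hXk_above (hγ_below _)).mono (image_mono hsub))

theorem stmt14_general (hn : 1 ≤ n) (haT : a ≤ T)
    (hγ_above : ∀ k, BddAbove (γ k '' Icc a T)) (hγ_below : ∀ k, BddBelow (γ k '' Icc a T))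
    (hX1 : ∀ t ∈ Icc a T, X 1 t = γ 1 t - γ 1 a)
    (hXrec : ∀ k, 2 ≤ k → k ≤ n → ∀ t ∈ Icc a T,
      X k t = skorokhodReflection a (γ k) (X (k - 1)) t) :
    X n T = sSup (passageSums γ a n T) := by
  obtain ⟨k, rfl⟩ := Nat.exists_eq_add_of_le' hn
  have hlub := isLUB_passageSums_iterated_skorokhodReflection hγ_above hγ_below hX1 hXrec hn le_rfl
    (right_mem_Icc.2 haT)
  exact (hlub.csSup_eq (passageSums_succ_nonempty γ k haT)).symm

end Iterated

end SkorokhodReflection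

/-- Iterated Skorokhod reflection gives the last-passage functional: if
`X^1 = γ^1` and `X^k(t) = γ^k(t) + sup_{0 ≤ s ≤ t} (X^{k−1}(s) − γ^k(s))` for
`2 ≤ k ≤ n`, then
`X^n(t) = sup_{0 = t_0 ≤ t_1 ≤ … ≤ t_n = t} Σ_{i=1}^n (γ^i(t_i) − γ^i(t_{i−1}))`. -/
theorem stmt14 (n : ℕ) (hn : 1 ≤ n) (γ : ℕ → ℝ → ℝ)
    (hγc : ∀ k, Continuous (γ k)) (hγ0 : ∀ k, γ k 0 = 0)
    (X : ℕ → ℝ → ℝ)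
    (hX1 : ∀ t, X 1 t = γ 1 t)
    (hXrec : ∀ k, 2 ≤ k → k ≤ n → ∀ t : ℝ, 0 ≤ t →
      X k t = γ k t + sSup ((fun s => X (k - 1) s - γ k s) '' Set.Icc 0 t)) :
    ∀ t : ℝ, 0 ≤ t →
      X n t = sSup {v : ℝ | ∃ τ : Fin (n + 1) → ℝ,
        Monotone τ ∧ τ 0 = 0 ∧ τ (Fin.last n) = t ∧
        v = ∑ i : Fin n, (γ ((i : ℕ) + 1) (τ i.succ) - γ ((i : ℕ) + 1) (τ i.castSucc))} := by
  intro t ht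
  exact stmt14_general hn ht (fun k ↦ isCompact_Icc.bddAbove_image (hγc k).continuousOn)
    (fun k ↦ isCompact_Icc.bddBelow_image (hγc k).continuousOn)
    (fun s _ ↦ by rw [hX1, hγ0, sub_zero]) fun k hk hkn s hs ↦ hXrec k hk hkn s hs.1
end

section
/- Let n ≥ 1 and let z, z' ∈ W^n. The determinant of the n×n real matrix M with entries M_{ij} = 1{z_i ≤ z'_j} equals the indicator of strict interlacing: det M = 1 if z_1 ≤ z'_1 < z_2 ≤ z'_2 < … < z_{n−1} ≤ z'_{n−1} < z_n ≤ z'_n, and det M = 0 otherwise. -/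
/-!
If `z` and `z'` interlace, the matrix is upper unitriangular. Conversely, a nonzero determinant
forces each row to be nonzero and to differ from the next one, so each half-open interval
`[z i, z (i + 1))`, and the final ray, contains some `z' (c i)`. As `z` and `z'` are monotone,
`c` is strictly increasing, and the only strictly increasing self-map of a finite chain is
the identity.
-/

section LEMatrix

variable {ι α : Type*} (R : Type*)

/-- The 0-1 matrix of the relation `z i ≤ z' j`, whose determinant is to be computed. -/
def leMatrix [Preorder α] [DecidableLE α] [Zero R] [One R] (z z' : ι → α) : Matrix ι ι R :=
  Matrix.of fun i j => if z i ≤ z' j then 1 else 0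

/-- The strict interlacing pattern `z₁ ≤ z'₁ < z₂ ≤ z'₂ < ⋯`, which for monotone `z` and `z'`
decides whether `leMatrix` has determinant `1` or `0`. All pairs `i < j` are compared, rather than
only consecutive indices, so that the definition makes sense over any index order; for monotone
`z : Fin n → α` the two agree. -/
def StrictlyInterlaces [Preorder ι] [Preorder α] (z z' : ι → α) : Prop :=
  (∀ i, z i ≤ z' i) ∧ ∀ i j, i < j → z' i < z j

theorem strictlyInterlaces_iff_forall_succ [Preorder α] {n : ℕ} {z z' : Fin n → α}
    (hz : Monotone z) :
    StrictlyInterlaces z z' ↔ (∀ i, z i ≤ z' i) ∧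
      ∀ (i : ℕ) (h : i + 1 < n), z' ⟨i, Nat.lt_of_succ_lt h⟩ < z ⟨i + 1, h⟩ := by
  refine and_congr_right fun _ => ⟨fun h i hi => h _ _ (Nat.lt_succ_self i), fun h i j hij => ?_⟩
  have hi : (i : ℕ) + 1 < n := by omega
  exact (h i hi).trans_le (hz (Nat.succ_le_of_lt hij))

theorem StrictlyInterlaces.det_leMatrix_eq_one [Fintype ι] [LinearOrder ι] [Preorder α]
    [DecidableLE α] [CommRing R] {z z' : ι → α} (h : StrictlyInterlaces z z') :
    (leMatrix R z z').det = 1 := by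
  have upperTriangular : (leMatrix R z z').IsUpperTriangular := fun i j hji =>
    if_neg (h.2 j i hji).not_ge
  rw [Matrix.det_of_isUpperTriangular upperTriangular]
  exact Finset.prod_eq_one fun i _ => if_pos (h.1 i)

theorem strictlyInterlaces_of_forall_exists [Finite ι] [LinearOrder ι] [Preorder α]
    {z z' : ι → α} (hz' : Monotone z')
    (h : ∀ i, ∃ j, z i ≤ z' j ∧ ∀ k, i < k → z' j < z k) : StrictlyInterlaces z z' := by
  choose c hle hlt using h
  have hc : StrictMono c := fun i k hik => hz'.reflect_lt ((hlt i k hik).trans_le (hle k))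
  simp only [hc.apply_eq] at hle hlt
  exact ⟨hle, hlt⟩

variable {R} [LinearOrder ι] [LinearOrder α] {z z' : ι → α}

theorem exists_le_and_forall_lt_of_det_leMatrix_ne_zero [Fintype ι] [CommRing R]
    (hz : Monotone z) (hdet : (leMatrix R z z').det ≠ 0) (i : ι) :
    ∃ j, z i ≤ z' j ∧ ∀ k, i < k → z' j < z k := by
  by_cases hi : IsMax i
  · obtain ⟨j, hj⟩ : ∃ j, z i ≤ z' j := by
      by_contra! hlt
      exact hdet (Matrix.det_eq_zero_of_row_eq_zero i fun j => if_neg (hlt j).not_ge)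
    exact ⟨j, hj, fun k hk => absurd hk hi.not_lt⟩
  · obtain ⟨s, hs⟩ := exists_covBy_of_wellFoundedLT hi
    obtain ⟨j, hij, hjs⟩ : ∃ j, z i ≤ z' j ∧ z' j < z s := by
      by_contra! hle
      refine hdet (Matrix.det_zero_of_row_eq hs.ne (funext fun j => ?_))
      exact if_congr ⟨hle j, (hz hs.le).trans⟩ rfl rfl
    exact ⟨j, hij, fun k hk => hjs.trans_le (hz (hs.ge_of_gt hk))⟩

theorem stmt15_general [Fintype ι] [CommRing R] [Decidable (StrictlyInterlaces z z')]
    (hz : Monotone z) (hz' : Monotone z') :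
    (leMatrix R z z').det = if StrictlyInterlaces z z' then 1 else 0 := by
  split_ifs with h
  · exact h.det_leMatrix_eq_one R
  · by_contra hdet
    exact h (strictlyInterlaces_of_forall_exists hz'
      (exists_le_and_forall_lt_of_det_leMatrix_ne_zero hz hdet))

end LEMatrix

open Classical in
/-- For `z, z' ∈ W^n`, `det{1{z_i ≤ z'_j}}` equals the indicator of the strict
interlacing `z_1 ≤ z'_1 < z_2 ≤ z'_2 < … < z_{n−1} ≤ z'_{n−1} < z_n ≤ z'_n`. -/
theorem stmt15 (n : ℕ) (hn : 1 ≤ n) (z z' : Fin n → ℝ)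
    (hz : Monotone z) (hz' : Monotone z') :
    Matrix.det (Matrix.of fun i j : Fin n => if z i ≤ z' j then (1 : ℝ) else 0)
      = if (∀ i : Fin n, z i ≤ z' i) ∧
           (∀ (i : ℕ) (h : i + 1 < n), z' ⟨i, by omega⟩ < z ⟨i + 1, h⟩)
        then 1 else 0 := by
  simp only [← strictlyInterlaces_iff_forall_succ hz]
  exact stmt15_general hz hz'
end

section
/- Let n ≥ 1 and let z, z' ∈ W^n. The determinant of the n×n real matrix N with entries N_{ij} = 1{z_i ≤ z'_j} for i ≥ j and N_{ij} = −1{z'_j < z_i} for i < j equals the indicator of coordinatewise domination: det N = 1 if z_i ≤ z'_i for all i ∈ {1,…,n}, and det N = 0 otherwise. -/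
/-! If `z` is dominated by `z'`, then `i < j` forces `z i ≤ z j ≤ z' j`, so `N` is lower triangular
with unit diagonal. If domination fails at `k`, then `z' j ≤ z' k < z k ≤ z i` for all `j ≤ k ≤ i`,
so `N` has a zero block whose numbers of rows and columns add up to `n + 1`; such a block meets the
graph of every permutation, and all terms of the Leibniz expansion vanish. -/

open Finset

theorem exists_mem_apply_mem_of_card_lt {β γ : Type*} [Fintype γ] {f : β → γ}
    (hf : Function.Injective f) {s : Finset γ} {t : Finset β}
    (hcard : Fintype.card γ < #s + #t) : ∃ j ∈ t, f j ∈ s := by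
  classical
  have hcard_image : #(univ : Finset γ) < #s + #(t.image f) := by
    rwa [card_image_of_injective t hf, card_univ]
  obtain ⟨_, hmem⟩ :=
    inter_nonempty_of_card_lt_card_add_card (subset_univ s) (subset_univ _) hcard_image
  obtain ⟨hs, ht⟩ := mem_inter.mp hmem
  obtain ⟨j, hj, rfl⟩ := mem_image.mp ht
  exact ⟨j, hj, hs⟩

theorem det_eq_zero_of_card_lt_of_zero_block {ι R : Type*} [Fintype ι] [DecidableEq ι] [CommRing R]
    {A : Matrix ι ι R} {s t : Finset ι} (hcard : Fintype.card ι < #s + #t)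
    (hA : ∀ i ∈ s, ∀ j ∈ t, A i j = 0) : A.det = 0 := by
  rw [Matrix.det_apply]
  refine sum_eq_zero fun σ _ ↦ ?_
  obtain ⟨j, hj, hσj⟩ := exists_mem_apply_mem_of_card_lt σ.injective hcard
  have hprod : ∏ i, A (σ i) i = 0 := prod_eq_zero (mem_univ j) (hA _ hσj j hj)
  rw [hprod, smul_zero]

theorem card_filter_ge_add_card_filter_le {ι : Type*} [Fintype ι] [LinearOrder ι] (k : ι) :
    #{i | k ≤ i} + #{i | i ≤ k} = Fintype.card ι + 1 := by
  have hunion : univ.filter (k ≤ ·) ∪ univ.filter (· ≤ k) = univ := by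
    ext i
    simpa using le_total k i
  have hinter : univ.filter (k ≤ ·) ∩ univ.filter (· ≤ k) = {k} := by
    ext i
    simp [antisymm_iff, eq_comm]
  rw [← card_union_add_card_inter, hunion, hinter, card_univ, card_singleton]

section DominationMatrix

variable {ι α : Type*} (R : Type*) [LinearOrder ι] [Preorder α] [DecidableLE α] [CommRing R]

/-- The matrix `N` whose determinant detects the coordinatewise domination `z ≤ z'`. The entries
above the diagonal are written with `¬ z i ≤ z' j` in place of `z' j < z i`, so that `α` may be any
preorder. -/
def dominationMatrix (z z' : ι → α) : Matrix ι ι R :=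
  Matrix.of fun i j ↦
    if j ≤ i then (if z i ≤ z' j then 1 else 0) else (if ¬ z i ≤ z' j then -1 else 0)

variable {z z' : ι → α}

theorem dominationMatrix_apply_self_of_le {i : ι} (h : z i ≤ z' i) :
    dominationMatrix R z z' i i = 1 := by
  simp [dominationMatrix, h]

theorem dominationMatrix_apply_eq_zero_of_lt {i j : ι} (hij : i < j) (h : z i ≤ z' j) :
    dominationMatrix R z z' i j = 0 := by
  simp [dominationMatrix, hij.not_ge, h]

theorem dominationMatrix_apply_eq_zero_of_ge {i j : ι} (hji : j ≤ i) (h : ¬ z i ≤ z' j) :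
    dominationMatrix R z z' i j = 0 := by
  simp [dominationMatrix, hji, h]

theorem isLowerTriangular_dominationMatrix (hz : Monotone z) (h : ∀ i, z i ≤ z' i) :
    (dominationMatrix R z z').IsLowerTriangular := fun i j hij ↦
  have hlt : i < j := OrderDual.toDual_lt_toDual.mp hij
  dominationMatrix_apply_eq_zero_of_lt R hlt ((hz hlt.le).trans (h j))

theorem det_dominationMatrix_eq_one [Fintype ι] (hz : Monotone z) (h : ∀ i, z i ≤ z' i) :
    (dominationMatrix R z z').det = 1 := by
  rw [Matrix.det_of_isLowerTriangular _ (isLowerTriangular_dominationMatrix R hz h)]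
  exact prod_eq_one fun i _ ↦ dominationMatrix_apply_self_of_le R (h i)

theorem det_dominationMatrix_eq_zero [Fintype ι] (hz : Monotone z) (hz' : Monotone z') {k : ι}
    (hk : ¬ z k ≤ z' k) : (dominationMatrix R z z').det = 0 := by
  have hcard : Fintype.card ι < #{i : ι | k ≤ i} + #{i : ι | i ≤ k} := by
    rw [card_filter_ge_add_card_filter_le]
    exact Nat.lt_succ_self _
  refine det_eq_zero_of_card_lt_of_zero_block hcard fun i hi j hj ↦ ?_
  have hki : k ≤ i := (mem_filter_univ i).mp hi
  have hjk : j ≤ k := (mem_filter_univ j).mp hj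
  exact dominationMatrix_apply_eq_zero_of_ge R (hjk.trans hki) fun hij ↦
    hk (((hz hki).trans hij).trans (hz' hjk))

theorem stmt16_general [Fintype ι] [Decidable (∀ i, z i ≤ z' i)]
    (hz : Monotone z) (hz' : Monotone z') :
    (dominationMatrix R z z').det = if ∀ i, z i ≤ z' i then 1 else 0 := by
  split_ifs with h
  · exact det_dominationMatrix_eq_one R hz h
  · obtain ⟨k, hk⟩ := not_forall.mp h
    exact det_dominationMatrix_eq_zero R hz hz' hk

end DominationMatrix

/-- For `z, z' ∈ W^n`, the determinant of the matrix with entries `1{z_i ≤ z'_j}` on and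
below the diagonal (`i ≥ j`) and `−1{z'_j < z_i}` above it (`i < j`) equals the indicator
of the coordinatewise domination `z_i ≤ z'_i` for all `i`. -/
theorem stmt16 (n : ℕ) (hn : 1 ≤ n) (z z' : Fin n → ℝ)
    (hz : Monotone z) (hz' : Monotone z') :
    Matrix.det (Matrix.of fun i j : Fin n =>
        if (j : ℕ) ≤ (i : ℕ) then (if z i ≤ z' j then (1 : ℝ) else 0)
        else (if z' j < z i then (-1 : ℝ) else 0))
      = if ∀ i : Fin n, z i ≤ z' i then 1 else 0 := by
  simpa only [dominationMatrix, not_le, Fin.le_def] using stmt16_general ℝ hz hz'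
end

section
/- Distribution function of the largest GUE eigenvalue: for every n ≥ 1, t > 0 and a ∈ ℝ, ∫_{{y ∈ W^n : y_n ≤ a}} μ^n_t(y) dy = det{Φ^{(i−j+1)}_t(a); 1 ≤ i,j ≤ n}. -/
open MeasureTheory Real

/-- The centered Gaussian density with variance `t`. -/
noncomputable def gauss (t y : ℝ) : ℝ :=
  (Real.sqrt (2 * Real.pi * t))⁻¹ * Real.exp (-y ^ 2 / (2 * t))

/-- `Φ^{(m)}_t` for `m : ℤ`: for `m ≥ 1` the `m`-th iterated integral of the Gaussian
density `φ_t`, for `m = 0` the density itself, and for `m ≤ −1` the `(−m)`-th derivative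
of `φ_t`. -/
noncomputable def PhiIter (t : ℝ) (m : ℤ) (y : ℝ) : ℝ :=
  if 1 ≤ m then
    ∫ x in Set.Iic y, ((y - x) ^ (m - 1).toNat / (Nat.factorial (m - 1).toNat : ℝ)) * gauss t x
  else iteratedDeriv (-m).toNat (fun z => gauss t z) y

/-- The Vandermonde product `h_m(z) = ∏_{i<j} (z_j − z_i)`. -/
noncomputable def vand (m : ℕ) (z : Fin m → ℝ) : ℝ :=
  ∏ j : Fin m, ∏ i ∈ Finset.Iio j, (z j - z i)

/-- The normalising constant `Z_m = (2π)^{m/2} ∏_{j=1}^{m−1} j!`. -/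
noncomputable def Zconst (m : ℕ) : ℝ :=
  (2 * Real.pi) ^ ((m : ℝ) / 2) * ∏ j ∈ Finset.range m, (Nat.factorial j : ℝ)

/-- The entrance law density `μ^n_t(y) = Z_n^{-1} t^{-n²/2} exp(−Σ_i y_i²/(2t)) h_n(y)²`. -/
noncomputable def muLaw (n : ℕ) (t : ℝ) (y : Fin n → ℝ) : ℝ :=
  (Zconst n)⁻¹ * t ^ (-((n : ℝ) ^ 2) / 2) * Real.exp (-(∑ i, (y i) ^ 2) / (2 * t))
    * (vand n y) ^ 2

/-! Both Vandermonde factors of `muLaw n t` arise from determinants by a triangular change of basis: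
one from the kernels `(a - x) ^ i / i !`, the other from the derivatives of the Gaussian density,
which are Hermite polynomials times that density. Andréief's identity, restricted to the chamber
`y_1 ≤ ⋯ ≤ y_n` by symmetry and taken for Lebesgue measure on `(-∞, a]`, turns the integral of their
product into the determinant of the pairings `∫ x in Iic a, (a - x) ^ i / i ! * φ_t^{(j)} x`.
Integrating by parts `j` times, each derivative cancels one of the `i + 1` integrations, so the
pairing equals `Φ^{(i-j+1)}_t(a)`. -/

section

open Matrix Polynomial Set
open scoped Nat

section Determinant

variable {ι R : Type*} [Fintype ι] [DecidableEq ι] [CommRing R]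

theorem det_mul_det_eq_sum_perm (A B : Matrix ι ι R) :
    A.det * B.det =
      ∑ τ : Equiv.Perm ι, (Equiv.Perm.sign τ : R) * (of fun j k => A (τ k) k * B j k).det := by
  rw [det_apply' A, Finset.sum_mul]
  refine Finset.sum_congr rfl fun τ _ => ?_
  rw [det_mul_row, mul_assoc]

theorem det_submatrix_perm_mul_det_submatrix_perm (A B : Matrix ι ι R) (σ : Equiv.Perm ι) :
    (A.submatrix id σ).det * (B.submatrix id σ).det = A.det * B.det := by
  rw [det_permute', det_permute', mul_mul_mul_comm, ← Int.cast_mul, Int.units_coe_mul_self,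
    Int.cast_one, one_mul]

theorem det_mul_eval_monic {n : ℕ} (c w y : Fin n → R) (p : Fin n → R[X])
    (hdeg : ∀ i, (p i).natDegree = i) (hmonic : ∀ i, (p i).Monic) :
    (of fun i k => c i * (w k * (p i).eval (y k))).det =
      (∏ i, c i) * ((∏ k, w k) * (vandermonde y).det) := by
  rw [det_eval_matrixOfPolynomials_eq_det_vandermonde y p hdeg hmonic,
    ← det_transpose (of fun i j => (p j).eval (y i)), ← det_mul_row, ← det_mul_column]
  rfl

end Determinant

section Andreief

variable {ι 𝕜 : Type*} [Fintype ι] [DecidableEq ι] [RCLike 𝕜]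

section Columns

variable {E : ι → Type*} [∀ k, MeasurableSpace (E k)] {ν : ∀ k, Measure (E k)}
  [∀ k, SigmaFinite (ν k)] {f : ι → ∀ k, E k → 𝕜}

theorem integrable_det_pi (hf : ∀ i k, Integrable (f i k) (ν k)) :
    Integrable (fun y : ∀ k, E k => (of fun i k => f i k (y k)).det) (Measure.pi ν) := by
  simp only [det_apply', of_apply]
  exact integrable_finsetSum _ fun σ _ => (Integrable.fintype_prod_dep fun k => hf _ k).const_mul _

theorem integral_det_pi (hf : ∀ i k, Integrable (f i k) (ν k)) :
    ∫ y : ∀ k, E k, (of fun i k => f i k (y k)).det ∂Measure.pi ν =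
      (of fun i k => ∫ x, f i k x ∂ν k).det := by
  simp only [det_apply', of_apply]
  rw [integral_finsetSum _ fun σ _ =>
    (Integrable.fintype_prod_dep fun k => hf (σ k) k).const_mul _]
  refine Finset.sum_congr rfl fun σ _ => ?_
  rw [integral_const_mul, integral_fintype_prod_eq_prod fun k => f (σ k) k]

end Columns

variable {α : Type*} [MeasurableSpace α] {ν : Measure α} [SigmaFinite ν] {p q : ι → α → 𝕜}

theorem integrable_det_mul_det (h : ∀ i j, Integrable (fun x => p i x * q j x) ν) :
    Integrable (fun y : ι → α => (of fun i k => p i (y k)).det * (of fun j k => q j (y k)).det)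
      (Measure.pi fun _ => ν) := by
  simp only [det_mul_det_eq_sum_perm, of_apply]
  exact integrable_finsetSum _ fun τ _ =>
    (integrable_det_pi fun j k => h (τ k) j).const_mul _

/-- **Andréief's identity**. -/
theorem integral_det_mul_det (h : ∀ i j, Integrable (fun x => p i x * q j x) ν) :
    ∫ y : ι → α, (of fun i k => p i (y k)).det * (of fun j k => q j (y k)).det
        ∂Measure.pi (fun _ => ν) =
      (Fintype.card ι)! * (of fun i j => ∫ x, p i x * q j x ∂ν).det := by
  set M : Matrix ι ι 𝕜 := of fun i j => ∫ x, p i x * q j x ∂ν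
  have hterm (τ : Equiv.Perm ι) :
      ∫ y : ι → α, (Equiv.Perm.sign τ : 𝕜) * (of fun j k => p (τ k) (y k) * q j (y k)).det
        ∂Measure.pi (fun _ => ν) = M.det := by
    rw [integral_const_mul, integral_det_pi (f := fun j k x => p (τ k) x * q j x)
      fun j k => h (τ k) j]
    change _ * (Mᵀ.submatrix id τ).det = _
    rw [det_permute', ← mul_assoc, ← Int.cast_mul, Int.units_coe_mul_self, Int.cast_one, one_mul,
      det_transpose]
  simp only [det_mul_det_eq_sum_perm, of_apply]
  rw [integral_finsetSum _ fun τ _ => (integrable_det_pi fun j k => h (τ k) j).const_mul _,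
    Finset.sum_congr rfl fun τ _ => hterm τ]
  simp [Fintype.card_perm]

end Andreief

section Symmetrization

theorem ae_injective_pi {ι α : Type*} [Fintype ι] [MeasurableSpace α] [MeasurableEq α]
    (ν : ι → Measure α) [∀ i, SigmaFinite (ν i)] [∀ i, NullSingletonClass (ν i)] :
    ∀ᵐ y : ι → α ∂Measure.pi ν, Function.Injective y := by
  classical
  have hne (i j : ι) (hji : j ≠ i) : ∀ᵐ y : ι → α ∂Measure.pi ν, y i ≠ y j := by
    have hmeas : MeasurableSet {z : ({k // k = i} → α) × ({k // k ≠ i} → α) |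
        z.1 ⟨i, rfl⟩ ≠ z.2 ⟨j, hji⟩} :=
      (measurableSet_eq_fun (by fun_prop) (by fun_prop)).compl
    refine (measurePreserving_piEquivPiSubtypeProd ν (· = i)).quasiMeasurePreserving.ae
      (p := fun z => z.1 ⟨i, rfl⟩ ≠ z.2 ⟨j, hji⟩)
      ((Measure.ae_prod_iff_ae_ae hmeas).2 (.of_forall fun x => ?_))
    exact (Measure.ae_eval_ne (μ := fun k : {k // k ≠ i} => ν k) ⟨j, hji⟩ (x ⟨i, rfl⟩)).mono
      fun _ => Ne.symm
  have hall : ∀ᵐ y : ι → α ∂Measure.pi ν, ∀ i j, j ≠ i → y i ≠ y j := by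
    simpa only [ae_all_iff] using hne
  filter_upwards [hall] with y hy i j hij
  exact not_ne_iff.1 fun hne => hy i j hne.symm hij

theorem sum_perm_indicator_monotone {n : ℕ} {α M : Type*} [LinearOrder α] [AddCommMonoid M]
    {y : Fin n → α} (hy : Function.Injective y) (F : (Fin n → α) → M) :
    ∑ σ : Equiv.Perm (Fin n), {y | Monotone y}.indicator F (y ∘ σ) = F (y ∘ Tuple.sort y) := by
  rw [Finset.sum_eq_single_of_mem (Tuple.sort y) (Finset.mem_univ _),
    indicator_of_mem (Tuple.monotone_sort y)]
  refine fun σ _ hσ => indicator_of_notMem (fun hmono => hσ ?_) _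
  exact Equiv.coe_fn_injective <| hy.comp_left <|
    Tuple.unique_monotone hmono (Tuple.monotone_sort y)

theorem measurePreserving_comp_perm {ι α : Type*} [Fintype ι] [MeasurableSpace α]
    (ν : Measure α) [SigmaFinite ν] (σ : Equiv.Perm ι) :
    MeasurePreserving (fun y : ι → α => y ∘ σ) (Measure.pi fun _ => ν) (Measure.pi fun _ => ν) :=
  measurePreserving_arrowCongr' _ _ σ.symm (.refl α) fun _ => .id ν

variable {n : ℕ} {α : Type*} [LinearOrder α] [TopologicalSpace α] [OrderClosedTopology α]
  [SecondCountableTopology α] [MeasurableSpace α] [OpensMeasurableSpace α]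
  (ν : Measure α) [SigmaFinite ν] [NullSingletonClass ν]

theorem integral_eq_factorial_smul_setIntegral_monotone {E : Type*} [NormedAddCommGroup E]
    [NormedSpace ℝ E] {F : (Fin n → α) → E} (hF : Integrable F (Measure.pi fun _ => ν))
    (hsymm : ∀ (σ : Equiv.Perm (Fin n)) y, F (y ∘ σ) = F y) :
    ∫ y, F y ∂(Measure.pi fun _ => ν) =
      n ! • ∫ y in {y | Monotone y}, F y ∂(Measure.pi fun _ => ν) := by
  have hmeas : MeasurableSet {y : Fin n → α | Monotone y} := isClosed_monotone.measurableSet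
  set G := {y : Fin n → α | Monotone y}.indicator F with hG
  have hGint : Integrable G (Measure.pi fun _ => ν) := hF.indicator hmeas
  have hsum : F =ᵐ[Measure.pi fun _ => ν] fun y => ∑ σ : Equiv.Perm (Fin n), G (y ∘ σ) := by
    filter_upwards [ae_injective_pi fun _ => ν] with y hy
    rw [sum_perm_indicator_monotone hy, hsymm]
  calc ∫ y, F y ∂(Measure.pi fun _ => ν)
      = ∑ σ : Equiv.Perm (Fin n), ∫ y, G (y ∘ σ) ∂(Measure.pi fun _ => ν) :=
        (integral_congr_ae hsum).trans <| integral_finsetSum _ fun σ _ =>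
          (measurePreserving_comp_perm ν σ).integrable_comp_of_integrable hGint
    _ = ∑ _σ : Equiv.Perm (Fin n), ∫ y, G y ∂(Measure.pi fun _ => ν) :=
        Finset.sum_congr rfl fun σ _ => (measurePreserving_comp_perm ν σ).integral_comp
          (MeasurableEquiv.arrowCongr' σ.symm (.refl α)).measurableEmbedding G
    _ = n ! • ∫ y in {y | Monotone y}, F y ∂(Measure.pi fun _ => ν) := by
        rw [hG, integral_indicator hmeas, Finset.sum_const, Finset.card_univ, Fintype.card_perm,
          Fintype.card_fin]

theorem setIntegral_monotone_det_mul_det {𝕜 : Type*} [RCLike 𝕜] {p q : Fin n → α → 𝕜}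
    (h : ∀ i j, Integrable (fun x => p i x * q j x) ν) :
    ∫ y in {y | Monotone y}, (of fun i k => p i (y k)).det * (of fun j k => q j (y k)).det
        ∂(Measure.pi fun _ => ν) =
      (of fun i j => ∫ x, p i x * q j x ∂ν).det := by
  have hfac : (n ! : 𝕜) ≠ 0 := Nat.cast_ne_zero.2 n.factorial_ne_zero
  have hsymm := integral_eq_factorial_smul_setIntegral_monotone ν (integrable_det_mul_det h)
    fun σ y => det_submatrix_perm_mul_det_submatrix_perm (of fun i k => p i (y k))
      (of fun j k => q j (y k)) σ
  rw [integral_det_mul_det h, Fintype.card_fin, nsmul_eq_mul] at hsymm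
  exact (mul_left_cancel₀ hfac hsymm).symm

end Symmetrization

section IntegrationByParts

theorem integral_Iic_mul_deriv_eq_sub_of_integrableOn {A : Type*} [NormedRing A]
    [NormedAlgebra ℝ A] [CompleteSpace A] {a : ℝ} {u v u' v' : ℝ → A}
    (hu : ∀ x ∈ Iic a, HasDerivAt u (u' x) x) (hv : ∀ x ∈ Iic a, HasDerivAt v (v' x) x)
    (huv' : IntegrableOn (fun x => u x * v' x) (Iic a))
    (hu'v : IntegrableOn (fun x => u' x * v x) (Iic a))
    (huv : IntegrableOn (fun x => u x * v x) (Iic a)) :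
    ∫ x in Iic a, u x * v' x = u a * v a - ∫ x in Iic a, u' x * v x := by
  have hderiv (x) (hx : x ∈ Iic a) :
      HasDerivAt (fun x => u x * v x) (u' x * v x + u x * v' x) x :=
    (hu x hx).mul (hv x hx)
  have hbot := tendsto_zero_of_hasDerivAt_of_integrableOn_Iic hderiv (hu'v.add huv') huv
  have hleft := (hderiv a self_mem_Iic).continuousAt.continuousWithinAt (s := Iio a)
  rw [integral_Iic_mul_deriv_eq_deriv_mul (fun x hx => hu x (Iio_subset_Iic_self hx))
    (fun x hx => hv x (Iio_subset_Iic_self hx)) huv' hu'v hleft hbot, sub_zero]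

end IntegrationByParts

section GaussianDerivatives

variable {t : ℝ}

theorem contDiff_gauss (t : ℝ) {m : WithTop ℕ∞} : ContDiff ℝ m (gauss t) := by
  unfold gauss
  fun_prop

theorem hasDerivAt_iteratedDeriv_gauss (t : ℝ) (j : ℕ) (x : ℝ) :
    HasDerivAt (iteratedDeriv j (gauss t)) (iteratedDeriv (j + 1) (gauss t) x) x := by
  rw [iteratedDeriv_succ]
  exact ((contDiff_gauss t).differentiable_iteratedDeriv' j x).hasDerivAt

/-- The monic Hermite polynomial of degree `j` for the Gaussian weight of variance `t`, namely
`t ^ (j / 2) * He_j (x / √t)` with `He_j` the probabilists' Hermite polynomial. -/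
noncomputable def gaussHermite (t : ℝ) (j : ℕ) : ℝ[X] :=
  ((hermite j).map (Int.castRingHom ℝ)).scaleRoots √t

theorem natDegree_gaussHermite (t : ℝ) (j : ℕ) : (gaussHermite t j).natDegree = j := by
  rw [gaussHermite, natDegree_scaleRoots, (hermite_monic j).natDegree_map, natDegree_hermite]

theorem monic_gaussHermite (t : ℝ) (j : ℕ) : (gaussHermite t j).Monic :=
  (monic_scaleRoots_iff _).2 ((hermite_monic j).map _)

theorem eval_gaussHermite (ht : 0 < t) (j : ℕ) (x : ℝ) :
    (gaussHermite t j).eval x = √t ^ j * aeval ((√t)⁻¹ * x) (hermite j) := by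
  have h := scaleRoots_eval_mul ((hermite j).map (Int.castRingHom ℝ)) ((√t)⁻¹ * x) √t
  rwa [mul_inv_cancel_left₀ (sqrt_pos.2 ht).ne', (hermite_monic j).natDegree_map,
    natDegree_hermite, eval_map] at h

theorem gauss_eq_standard (ht : 0 ≤ t) (x : ℝ) :
    gauss t x = (√(2 * π * t))⁻¹ * rexp (-(((√t)⁻¹ * x) ^ 2 / 2)) := by
  rw [gauss, mul_pow, inv_pow, sq_sqrt ht]
  ring_nf

theorem iteratedDeriv_gauss (ht : 0 < t) (j : ℕ) (x : ℝ) :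
    iteratedDeriv j (gauss t) x = (-t⁻¹) ^ j * (gauss t x * (gaussHermite t j).eval x) := by
  have hsmooth : ContDiff ℝ j fun y : ℝ => rexp (-(y ^ 2 / 2)) := by fun_prop
  have hscale : (√t)⁻¹ ^ j = t⁻¹ ^ j * √t ^ j := by
    rw [← mul_pow]
    congr 1
    rw [eq_inv_mul_iff_mul_eq₀ ht.ne', mul_inv_eq_iff_eq_mul₀ (sqrt_pos.2 ht).ne',
      mul_self_sqrt ht.le]
  calc iteratedDeriv j (gauss t) x
      = (√(2 * π * t))⁻¹ * ((√t)⁻¹ ^ j *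
          iteratedDeriv j (fun y : ℝ => rexp (-(y ^ 2 / 2))) ((√t)⁻¹ * x)) := by
        rw [funext (gauss_eq_standard ht.le), iteratedDeriv_const_mul_field,
          iteratedDeriv_comp_const_mul hsmooth]
    _ = (-t⁻¹) ^ j * (gauss t x * (gaussHermite t j).eval x) := by
        rw [iteratedDeriv_eq_iterate, deriv_gaussian_eq_hermite_mul_gaussian,
          eval_gaussHermite ht, gauss_eq_standard ht.le, hscale, neg_pow t⁻¹]
        ring

theorem integrable_eval_mul_gauss (ht : 0 < t) (p : ℝ[X]) :
    Integrable fun x => p.eval x * gauss t x := by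
  induction p using Polynomial.induction_on' with
  | add p q hp hq =>
    simp only [eval_add, add_mul]
    exact hp.add hq
  | monomial n c =>
    have hmoment : Integrable fun x : ℝ => x ^ (n : ℝ) * rexp (-(2 * t)⁻¹ * x ^ 2) :=
      integrable_rpow_mul_exp_neg_mul_sq (by positivity) (by linarith [n.cast_nonneg (α := ℝ)])
    refine (hmoment.const_mul (c * (√(2 * π * t))⁻¹)).congr (.of_forall fun x => ?_)
    have hexp : -(2 * t)⁻¹ * x ^ 2 = -x ^ 2 / (2 * t) := by ring
    simp only [eval_monomial, gauss, rpow_natCast, hexp]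
    ring

/-- The kernel of the `(i + 1)`-fold integral from `-∞` to `a`, in Cauchy's formula for repeated
integration. -/
noncomputable def taylorKernel (a : ℝ) (i : ℕ) (x : ℝ) : ℝ :=
  (a - x) ^ i / i !

theorem taylorKernel_eq_eval (a : ℝ) (i : ℕ) (x : ℝ) :
    taylorKernel a i x = (-1) ^ i / (i ! : ℝ) * ((X - C a) ^ i).eval x := by
  rw [taylorKernel, eval_pow, eval_sub, eval_X, eval_C, div_mul_eq_mul_div, ← mul_pow,
    neg_one_mul, neg_sub]

theorem integrable_taylorKernel_mul_iteratedDeriv_gauss (ht : 0 < t) (a : ℝ) (i j : ℕ) :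
    Integrable fun x => taylorKernel a i x * iteratedDeriv j (gauss t) x := by
  refine ((integrable_eval_mul_gauss ht ((X - C a) ^ i * gaussHermite t j)).const_mul
    ((-1) ^ i / (i ! : ℝ) * (-t⁻¹) ^ j)).congr (.of_forall fun x => ?_)
  simp only [taylorKernel_eq_eval, iteratedDeriv_gauss ht, eval_mul]
  ring

theorem hasDerivAt_taylorKernel_succ (a : ℝ) (i : ℕ) (x : ℝ) :
    HasDerivAt (taylorKernel a (i + 1)) (-taylorKernel a i x) x := by
  refine ((((hasDerivAt_id x).const_sub a).pow (i + 1)).div_const _).congr_deriv ?_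
  rw [taylorKernel, Nat.factorial_succ]
  push_cast
  field_simp
  simp

theorem PhiIter_sub_add_one (ht : 0 < t) (a : ℝ) (i j : ℕ) :
    PhiIter t (i - j + 1) a =
      ∫ x in Iic a, taylorKernel a i x * iteratedDeriv j (gauss t) x := by
  have hint (i j : ℕ) := (integrable_taylorKernel_mul_iteratedDeriv_gauss ht a i j).integrableOn
    (s := Iic a)
  induction j generalizing i with
  | zero => simp [PhiIter, taylorKernel]
  | succ j ih =>
    cases i with
    | zero =>
      have hneg : ¬ 1 ≤ -(j : ℤ) := by omega
      have hparts := integral_Iic_mul_deriv_eq_sub_of_integrableOn (a := a)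
        (fun x _ => hasDerivAt_const x (1 : ℝ)) (fun x _ => hasDerivAt_iteratedDeriv_gauss t j x)
        (by simpa [taylorKernel] using hint 0 (j + 1)) (by simp)
        (by simpa [taylorKernel] using hint 0 j)
      simpa [PhiIter, taylorKernel, hneg] using hparts.symm
    | succ i =>
      have hint_neg :
          IntegrableOn (fun x => -taylorKernel a i x * iteratedDeriv j (gauss t) x) (Iic a) := by
        simp only [neg_mul]
        exact (hint i j).neg
      have hparts := integral_Iic_mul_deriv_eq_sub_of_integrableOn (a := a)
        (fun x _ => hasDerivAt_taylorKernel_succ a i x)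
        (fun x _ => hasDerivAt_iteratedDeriv_gauss t j x)
        (hint (i + 1) (j + 1)) hint_neg (hint (i + 1) j)
      have hkernel : taylorKernel a (i + 1) a = 0 := by simp [taylorKernel]
      rw [hparts, hkernel, zero_mul, zero_sub, Nat.cast_succ, Nat.cast_succ,
        add_sub_add_right_eq_sub, ih]
      simp only [neg_mul, integral_neg, neg_neg]

end GaussianDerivatives

section DensityFactorization

variable {n : ℕ} {t : ℝ}

theorem det_vandermonde_eq_vand (y : Fin n → ℝ) : (vandermonde y).det = vand n y := by
  rw [det_vandermonde, vand]
  exact Finset.prod_comm' (by simp)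

theorem det_taylorKernel (a : ℝ) (y : Fin n → ℝ) :
    (of fun i k : Fin n => taylorKernel a i (y k)).det =
      (∏ i : Fin n, (-1) ^ (i : ℕ) / ((i : ℕ)! : ℝ)) * vand n y := by
  have h := det_mul_eval_monic (fun i : Fin n => (-1) ^ (i : ℕ) / ((i : ℕ)! : ℝ)) 1 y
    (fun i => (X - C a) ^ (i : ℕ)) (fun i => by
      rw [(monic_X_sub_C a).natDegree_pow, natDegree_X_sub_C, mul_one])
    (fun i => (monic_X_sub_C a).pow i)
  simpa [taylorKernel_eq_eval, det_vandermonde_eq_vand] using h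

theorem det_iteratedDeriv_gauss (ht : 0 < t) (y : Fin n → ℝ) :
    (of fun j k : Fin n => iteratedDeriv j (gauss t) (y k)).det =
      (∏ j : Fin n, (-t⁻¹) ^ (j : ℕ)) * ((∏ k, gauss t (y k)) * vand n y) := by
  simp only [iteratedDeriv_gauss ht, ← det_vandermonde_eq_vand]
  exact det_mul_eval_monic _ (fun k => gauss t (y k)) y (fun j => gaussHermite t j)
    (fun j => natDegree_gaussHermite t j) (fun j => monic_gaussHermite t j)

theorem prod_gauss (t : ℝ) (y : Fin n → ℝ) :
    ∏ k, gauss t (y k) = (√(2 * π * t))⁻¹ ^ n * rexp (-(∑ k, y k ^ 2) / (2 * t)) := by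
  simp only [gauss]
  rw [Finset.prod_mul_distrib, Finset.prod_const, Finset.card_univ, Fintype.card_fin,
    ← exp_sum, ← Finset.sum_div, Finset.sum_neg_distrib]

theorem Zconst_inv_mul_rpow (n : ℕ) (ht : 0 < t) :
    (Zconst n)⁻¹ * t ^ (-((n : ℝ) ^ 2) / 2) =
      (∏ i ∈ Finset.range n, t⁻¹ ^ i / (i ! : ℝ)) * (√(2 * π * t))⁻¹ ^ n := by
  induction n with
  | zero => simp [Zconst]
  | succ n ih =>
    have hpi : (0 : ℝ) < 2 * π := by positivity
    have hpow_pi : (2 * π) ^ (((n + 1 : ℕ) : ℝ) / 2) = (2 * π) ^ ((n : ℝ) / 2) * √(2 * π) := by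
      rw [Nat.cast_succ, add_div, rpow_add hpi, ← sqrt_eq_rpow]
    have hpow_t : t ^ (-(((n + 1 : ℕ) : ℝ) ^ 2) / 2) =
        t ^ (-((n : ℝ) ^ 2) / 2) * (t⁻¹ ^ n * (√t)⁻¹) := by
      rw [sqrt_eq_rpow, inv_pow, ← rpow_natCast t n, ← rpow_neg ht.le, ← rpow_neg ht.le,
        ← rpow_add ht, ← rpow_add ht]
      congr 1
      push_cast
      ring
    have hZ : Zconst (n + 1) = Zconst n * (√(2 * π) * n !) := by
      rw [Zconst, Zconst, Finset.prod_range_succ, hpow_pi, mul_mul_mul_comm]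
    rw [Finset.prod_range_succ, pow_succ (√(2 * π * t))⁻¹, mul_mul_mul_comm, ← ih, hZ, hpow_t,
      sqrt_mul hpi.le]
    simp only [mul_inv, div_eq_mul_inv]
    ring

theorem muLaw_eq_det_mul_det (ht : 0 < t) (a : ℝ) (y : Fin n → ℝ) :
    muLaw n t y = (of fun i k : Fin n => taylorKernel a i (y k)).det *
      (of fun j k : Fin n => iteratedDeriv j (gauss t) (y k)).det := by
  have hconst : (∏ i : Fin n, t⁻¹ ^ (i : ℕ) / ((i : ℕ)! : ℝ)) =
      (∏ i : Fin n, (-1) ^ (i : ℕ) / ((i : ℕ)! : ℝ)) * ∏ i : Fin n, (-t⁻¹) ^ (i : ℕ) := by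
    rw [← Finset.prod_mul_distrib]
    refine Finset.prod_congr rfl fun i _ => ?_
    rw [div_mul_eq_mul_div, ← mul_pow, neg_mul_neg, one_mul]
  rw [det_taylorKernel, det_iteratedDeriv_gauss ht, prod_gauss, muLaw, Zconst_inv_mul_rpow n ht,
    ← Fin.prod_univ_eq_prod_range (fun i => t⁻¹ ^ i / (i ! : ℝ)), hconst]
  ring

end DensityFactorization

theorem setOf_monotone_and_last_le {α : Type*} [Preorder α] {n : ℕ} (hn : 1 ≤ n) (a : α) :
    {y : Fin n → α | Monotone y ∧ y ⟨n - 1, Nat.sub_one_lt_of_lt hn⟩ ≤ a} =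
      {y | Monotone y} ∩ univ.pi fun _ => Iic a := by
  ext y
  refine and_congr_right fun hmono =>
    ⟨fun hlast i _ => (hmono ?_).trans hlast, fun h => h _ trivial⟩
  exact Nat.le_sub_one_of_lt i.isLt

end

/-- Distribution function of the largest GUE eigenvalue:
`∫_{y ∈ W^n, y_n ≤ a} μ^n_t(y) dy = det{Φ^{(i−j+1)}_t(a)}`. -/
theorem stmt17 (n : ℕ) (hn : 1 ≤ n) (t : ℝ) (ht : 0 < t) (a : ℝ) :
    (∫ y in {y : Fin n → ℝ | Monotone y ∧ y ⟨n - 1, by omega⟩ ≤ a}, muLaw n t y)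
      = Matrix.det (Matrix.of fun i j : Fin n => PhiIter t ((i : ℤ) - (j : ℤ) + 1) a) := by
  rw [setOf_monotone_and_last_le hn, ← Measure.restrict_restrict isClosed_monotone.measurableSet,
    volume_pi, Measure.restrict_pi_pi]
  simp only [muLaw_eq_det_mul_det ht a, PhiIter_sub_add_one ht]
  exact setIntegral_monotone_det_mul_det _ fun i j =>
    (integrable_taylorKernel_mul_iteratedDeriv_gauss ht a i j).integrableOn
end

section
/- Integrated Karlin–McGregor identity: let n ≥ 1, t > 0, z ∈ W^n and z' ∈ W^n, and set z'_0 = −∞. Let R = {u ∈ ℝ^n : z'_{j−1} < u_j ≤ z'_j for each j = 1,…,n}. Then ∫_R det{φ_t(u_j − z_i); 1 ≤ i,j ≤ n} du = det{Φ_t(z'_j − z_i); 1 ≤ i,j ≤ n}. -/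
open MeasureTheory Real

/-- The Gaussian cumulative distribution function `Φ_t`. -/
noncomputable def gaussCDF (t y : ℝ) : ℝ := ∫ z in Set.Iic y, gauss t z

/-! Expanding the determinant over permutations and applying Fubini to each term moves the integral
over a box into the matrix entries. In the resulting matrix, the `j`-th column consists of integrals
over `(b (j - 1), b j]`, where `b (-1) = -∞`; adding to each column all the preceding ones leaves
the determinant unchanged and turns these into integrals over `(-∞, b j]`. -/

section Fubini

variable {ι 𝕜 : Type*} [Fintype ι] [DecidableEq ι] [RCLike 𝕜] {X : ι → Type*}
  [∀ j, MeasurableSpace (X j)] {μ : ∀ j, Measure (X j)} [∀ j, SigmaFinite (μ j)]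

theorem integral_det_pi_s19 {f : ι → ∀ j, X j → 𝕜} (hf : ∀ i j, Integrable (f i j) (μ j)) :
    ∫ u, (Matrix.of fun i j ↦ f i j (u j)).det ∂Measure.pi μ =
      (Matrix.of fun i j ↦ ∫ x, f i j x ∂μ j).det := by
  simp only [Matrix.det_apply', Matrix.of_apply]
  rw [integral_finsetSum]
  · refine Finset.sum_congr rfl fun σ _ ↦ ?_
    rw [integral_const_mul, integral_fintype_prod_eq_prod fun j ↦ f (σ j) j]
  · exact fun σ _ ↦ (Integrable.fintype_prod_dep fun j ↦ hf (σ j) j).const_mul _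

theorem setIntegral_det_pi {f : ι → ∀ j, X j → 𝕜} {s : ∀ j, Set (X j)}
    (hf : ∀ i j, IntegrableOn (f i j) (s j) (μ j)) :
    ∫ u in Set.univ.pi s, (Matrix.of fun i j ↦ f i j (u j)).det ∂Measure.pi μ =
      (Matrix.of fun i j ↦ ∫ x in s j, f i j x ∂μ j).det := by
  rw [Measure.restrict_pi_pi, integral_det_pi_s19 hf]

end Fubini

/-- The interval `(b i, b j]` between consecutive entries of an ordered family, where `i` is the
immediate predecessor of `j`; if there is none, then it is `(-∞, b j]`. -/
def consecutiveIoc {ι α : Type*} [Preorder ι] [Preorder α] (b : ι → α) (j : ι) : Set α :=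
  {x | x ≤ b j ∧ ∀ i, i ⋖ j → b i < x}

section ConsecutiveIoc

variable {ι α : Type*} [Preorder α]

theorem consecutiveIoc_subset_Iic [Preorder ι] (b : ι → α) (j : ι) :
    consecutiveIoc b j ⊆ Set.Iic (b j) :=
  fun _ hx ↦ hx.1

theorem consecutiveIoc_of_isMin [Preorder ι] {j : ι} (hj : IsMin j) (b : ι → α) :
    consecutiveIoc b j = Set.Iic (b j) :=
  (consecutiveIoc_subset_Iic b j).antisymm fun _ hx ↦ ⟨hx, fun _ hi ↦ (hj.not_lt hi.lt).elim⟩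

theorem consecutiveIoc_of_covBy [LinearOrder ι] {i j : ι} (hij : i ⋖ j) (b : ι → α) :
    consecutiveIoc b j = Set.Ioc (b i) (b j) := by
  ext x
  exact ⟨fun hx ↦ ⟨hx.2 i hij, hx.1⟩, fun hx ↦ ⟨hx.2, fun k hk ↦ hk.unique_left hij ▸ hx.1⟩⟩

theorem univ_pi_consecutiveIoc_fin {n : ℕ} (b : Fin n → α) :
    Set.univ.pi (consecutiveIoc b) = {u | ∀ j : Fin n, u j ≤ b j ∧
      ∀ _ : 0 < (j : ℕ), b ⟨(j : ℕ) - 1, Nat.sub_lt_of_lt j.isLt⟩ < u j} := by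
  ext u
  refine Set.mem_univ_pi.trans <| forall_congr' fun j ↦ and_congr_right fun _ ↦ ⟨?_, ?_⟩
  · intro hu hj
    exact hu _ (Fin.covBy_iff.2 (Nat.covBy_iff_add_one_eq.2 (Nat.sub_add_cancel hj)))
  · intro hu i hij
    obtain hij : (i : ℕ) + 1 = j := Nat.covBy_iff_add_one_eq.1 (Fin.covBy_iff.1 hij)
    simpa only [← hij, Nat.add_sub_cancel] using hu (hij ▸ i.succ_pos)

end ConsecutiveIoc

section LinearOrder

variable {α : Type*} [LinearOrder α] [TopologicalSpace α] [OrderClosedTopology α]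
  [MeasurableSpace α] [OpensMeasurableSpace α] {μ : Measure α}

theorem setIntegral_Iic_eq_Ioc_add_Iic {E : Type*} [NormedAddCommGroup E] [NormedSpace ℝ E]
    {f : α → E} {a b : α} (hab : a ≤ b) (hf : IntegrableOn f (Set.Iic b) μ) :
    ∫ x in Set.Iic b, f x ∂μ = ∫ x in Set.Ioc a b, f x ∂μ + ∫ x in Set.Iic a, f x ∂μ := by
  rw [add_comm, ← setIntegral_union (Set.Iic_disjoint_Ioc le_rfl) measurableSet_Ioc
    (hf.mono_set (Set.Iic_subset_Iic.2 hab)) (hf.mono_set Set.Ioc_subset_Iic_self),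
    Set.Iic_union_Ioc_eq_Iic hab]

variable {𝕜 : Type*} [RCLike 𝕜] {n : ℕ} {f : Fin n → α → 𝕜} {b : Fin n → α}

theorem det_setIntegral_Iic_eq_det_setIntegral_consecutiveIoc
    (hf : ∀ i j, IntegrableOn (f i) (Set.Iic (b j)) μ) (hb : Monotone b) :
    (Matrix.of fun i j ↦ ∫ x in Set.Iic (b j), f i x ∂μ).det =
      (Matrix.of fun i j ↦ ∫ x in consecutiveIoc b j, f i x ∂μ).det := by
  cases n with
  | zero => simp only [Matrix.det_isEmpty]
  | succ n =>
    refine Matrix.det_eq_of_forall_col_eq_smul_add_pred (fun _ ↦ 1) (fun i ↦ ?_) fun i j ↦ ?_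
    · have hmin : IsMin (0 : Fin (n + 1)) := isMin_bot
      simp only [Matrix.of_apply, consecutiveIoc_of_isMin hmin]
    · have hcov : j.castSucc ⋖ j.succ := by simp
      simp only [Matrix.of_apply, consecutiveIoc_of_covBy hcov, one_mul]
      exact setIntegral_Iic_eq_Ioc_add_Iic (hb hcov.le) (hf i j.succ)

theorem stmt19_general [SigmaFinite μ] (hf : ∀ i j, IntegrableOn (f i) (Set.Iic (b j)) μ)
    (hb : Monotone b) :
    ∫ u in Set.univ.pi (consecutiveIoc b),
        (Matrix.of fun i j ↦ f i (u j)).det ∂Measure.pi (fun _ ↦ μ) =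
      (Matrix.of fun i j ↦ ∫ x in Set.Iic (b j), f i x ∂μ).det := by
  rw [det_setIntegral_Iic_eq_det_setIntegral_consecutiveIoc hf hb]
  exact setIntegral_det_pi fun i j ↦ (hf i j).mono_set (consecutiveIoc_subset_Iic b j)

end LinearOrder

theorem gauss_eq_gaussianPDFReal (v : NNReal) :
    gauss v = ProbabilityTheory.gaussianPDFReal 0 v := by
  ext y
  simp [gauss, ProbabilityTheory.gaussianPDFReal]

theorem integrable_gauss {t : ℝ} (ht : 0 ≤ t) : Integrable (gauss t) := by
  lift t to NNReal using ht
  exact gauss_eq_gaussianPDFReal t ▸ ProbabilityTheory.integrable_gaussianPDFReal 0 t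

theorem gaussCDF_sub (t a b : ℝ) :
    gaussCDF t (b - a) = ∫ x in Set.Iic b, gauss t (x - a) := by
  rw [gaussCDF, ← (measurePreserving_sub_right volume a).setIntegral_preimage_emb
    (measurableEmbedding_subRight a), Set.preimage_sub_const_Iic, sub_add_cancel]

/-- Integrated Karlin–McGregor identity: integrating `det{φ_t(u_j − z_i)}` over the box
`R = {u : z'_{j−1} < u_j ≤ z'_j}` (with `z'_0 = −∞`) gives `det{Φ_t(z'_j − z_i)}`. -/
theorem stmt19 (n : ℕ) (hn : 1 ≤ n) (t : ℝ) (ht : 0 < t)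
    (z z' : Fin n → ℝ) (hz : Monotone z) (hz' : Monotone z') :
    (∫ u in {u : Fin n → ℝ | ∀ j : Fin n,
        u j ≤ z' j ∧ ∀ h : 0 < (j : ℕ), z' ⟨(j : ℕ) - 1, by omega⟩ < u j},
      Matrix.det (Matrix.of fun i j : Fin n => gauss t (u j - z i)))
      = Matrix.det (Matrix.of fun i j : Fin n => gaussCDF t (z' j - z i)) := by
  simpa only [univ_pi_consecutiveIoc_fin, gaussCDF_sub, volume_pi] using stmt19_general
    (fun i _ ↦ ((integrable_gauss ht.le).comp_sub_right (z i)).integrableOn) hz'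
end
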